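/- arXiv:0810.2497 — 3 statements merged into one kernel-verified Lean document; each statement's English description precedes it below -/
import Mathlib

section
/- Let A be a C*-algebra, I a closed two-sided ideal of A, and T : A → A an elementary operator, i.e. T(x) = Σ_{i=1}^N a_i x b_i for some elements a_1,…,a_N, b_1,…,b_N of the minimal unitization of A. Then the closure of T(I) is proximinal in the closure of T(A): for every x in the closure of T(A) there exists y in the closure of T(I) such that ‖x − y‖ = dist(x, closure(T(I))). -/
/-!
An approximate unit `e` of an ideal of a C*-algebra behaves in the weak topology like a central
projection: a real functional that is nearly normed at `g` is small on bounded elements nearly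
orthogonal to `g`, and `(1 - e) * a * e` is asymptotically orthogonal to every `g` in the ideal.
So an elementary operator `T` weakly commutes with `e`, and compressing by `e` and `1 - e` produces
points of the convex set `T '' I` that are weakly asymptotic to points of two prescribed balls.
The Hahn–Banach theorem turns these into norm approximants, which is Yost's 1½-ball property of
`T '' I` relative to the range of `T`. This property passes to closures, where iterating it yields
best approximations.
-/

open Filter Metric Topology

section OneAndHalfBall

variable {E F : Type*} [PseudoMetricSpace E] [PseudoMetricSpace F]

/-- Yost's 1½-ball property of `Y` relative to `X`, with open balls: whenever `ball x r` meets `Y`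
and the radii of `ball x r` and `ball y s` add up to more than the distance of their centres
`x ∈ X` and `y ∈ Y`, the two balls have a common point in `Y`. It makes `Y` proximinal in `X`. -/
def OneAndHalfBallProperty (Y X : Set E) : Prop :=
  ∀ ⦃x⦄, x ∈ X → ∀ ⦃y⦄, y ∈ Y → ∀ ⦃r s : ℝ⦄, 0 < s → dist x y < r + s →
    (Y ∩ ball x r).Nonempty → (Y ∩ ball x r ∩ ball y s).Nonempty

namespace OneAndHalfBallProperty

variable {X X' Y : Set E}

lemma of_forall_pos_add (h : ∀ x ∈ X, ∀ y ∈ Y, ∀ p ∈ Y, ∀ r s δ : ℝ, dist x p ≤ r → 0 < s →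
    dist x y ≤ r + s → 0 < δ → (Y ∩ ball x (r + δ) ∩ ball y (s + δ)).Nonempty) :
    OneAndHalfBallProperty Y X := by
  rintro x hx y hy r s hs hxy ⟨p, hpY, hp⟩
  rw [mem_ball'] at hp
  obtain ⟨δ, hδ, hδ'⟩ := exists_between
    (lt_min (lt_min (half_pos (sub_pos.2 hxy)) (sub_pos.2 hp)) hs)
  simp only [lt_min_iff] at hδ'
  simpa using h x hx y hy p hpY (r - δ) (s - δ) δ (by linarith) (by linarith) (by linarith) hδ

lemma mono_right (h : OneAndHalfBallProperty Y X) (hX : X' ⊆ X) : OneAndHalfBallProperty Y X' :=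
  fun _ hx => h (hX hx)

lemma of_image {f : E → F} (hf : Isometry f) (h : OneAndHalfBallProperty (f '' Y) (f '' X)) :
    OneAndHalfBallProperty Y X := by
  rintro x hx y hy r s hs hxy ⟨p, hpY, hp⟩
  obtain ⟨_, ⟨⟨q, hqY, rfl⟩, hqx⟩, hqy⟩ :=
    h (Set.mem_image_of_mem f hx) (Set.mem_image_of_mem f hy) hs (by rwa [hf.dist_eq])
      ⟨f p, Set.mem_image_of_mem f hpY, by rwa [mem_ball, hf.dist_eq]⟩
  rw [mem_ball, hf.dist_eq] at hqx hqy
  exact ⟨q, ⟨hqY, hqx⟩, hqy⟩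

protected lemma closure (h : OneAndHalfBallProperty Y X) :
    OneAndHalfBallProperty (closure Y) (closure X) := by
  rintro x hx y hy r s hs hxy ⟨p, hpY, hp⟩
  rw [mem_ball'] at hp
  obtain ⟨δ, hδ, hδ'⟩ := exists_between (lt_min (lt_min
    (div_pos (sub_pos.2 hxy) four_pos) (div_pos (sub_pos.2 hp) three_pos)) hs)
  simp only [lt_min_iff] at hδ'
  obtain ⟨x₁, hx₁X, hxx₁⟩ := mem_closure_iff.1 hx δ hδ
  obtain ⟨y₁, hy₁Y, hyy₁⟩ := mem_closure_iff.1 hy δ hδ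
  obtain ⟨p₁, hp₁Y, hpp₁⟩ := mem_closure_iff.1 hpY δ hδ
  have hx₁y₁ := dist_triangle4_right x₁ y₁ x y
  have hx₁p₁ := dist_triangle4_right x₁ p₁ x p
  rw [dist_comm x₁ x, dist_comm y₁ y] at hx₁y₁
  rw [dist_comm x₁ x, dist_comm p₁ p] at hx₁p₁
  obtain ⟨q, ⟨hqY, hqx⟩, hqy⟩ := h hx₁X hy₁Y (r := r - δ) (s := s - δ) (by linarith)
    (by linarith) ⟨p₁, hp₁Y, by rw [mem_ball']; linarith⟩
  rw [mem_ball'] at hqx hqy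
  refine ⟨q, ⟨subset_closure hqY, ?_⟩, ?_⟩
  · exact mem_ball'.2 (by linarith [dist_triangle x x₁ q])
  · exact mem_ball'.2 (by linarith [dist_triangle y y₁ q])

/-- Halving the excess `ε` in `dist x y < infDist x Y + ε` costs a displacement of at most `ε / 2`,
so iteration converges. -/
lemma exists_dist_eq_infDist [CompleteSpace E] (h : OneAndHalfBallProperty Y X)
    (hY : IsClosed Y) (hne : Y.Nonempty) {x : E} (hx : x ∈ X) :
    ∃ y ∈ Y, dist x y = infDist x Y := by
  have improve : ∀ n : ℕ, ∀ y ∈ Y, dist x y < infDist x Y + 2⁻¹ ^ n →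
      ∃ y' ∈ Y, dist x y' < infDist x Y + 2⁻¹ ^ (n + 1) ∧ dist y y' < 2⁻¹ ^ (n + 1) := by
    intro n y hy hxy
    have hpos : (0 : ℝ) < 2⁻¹ ^ (n + 1) := by positivity
    obtain ⟨p, hpY, hp⟩ := (infDist_lt_iff hne).1 (lt_add_of_pos_right (infDist x Y) hpos)
    obtain ⟨q, ⟨hqY, hqx⟩, hqy⟩ := h hx hy hpos (by rw [pow_succ]; linarith)
      ⟨p, hpY, mem_ball'.2 hp⟩
    exact ⟨q, hqY, mem_ball'.1 hqx, mem_ball'.1 hqy⟩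
  choose! f hfY hfx hf using improve
  obtain ⟨y₀, hy₀Y, hy₀⟩ := (infDist_lt_iff hne).1 (lt_add_one (infDist x Y))
  let u : ℕ → E := fun n => Nat.rec y₀ f n
  have hu : ∀ n, u n ∈ Y ∧ dist x (u n) < infDist x Y + 2⁻¹ ^ n := by
    intro n
    induction n with
    | zero => exact ⟨hy₀Y, by simpa [u] using hy₀⟩
    | succ n ih => exact ⟨hfY n _ ih.1 ih.2, hfx n _ ih.1 ih.2⟩
  have hcauchy : CauchySeq u := cauchySeq_of_le_geometric 2⁻¹ 2⁻¹ (by norm_num) fun n =>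
    ((hf n _ (hu n).1 (hu n).2).trans_eq (pow_succ' _ _)).le
  obtain ⟨y, hy⟩ := cauchySeq_tendsto_of_complete hcauchy
  have hyY : y ∈ Y := hY.mem_of_tendsto hy (.of_forall fun n => (hu n).1)
  have hlim : Tendsto (fun n => infDist x Y + 2⁻¹ ^ n) atTop (𝓝 (infDist x Y)) := by
    simpa using (tendsto_pow_atTop_nhds_zero_of_lt_one (r := (2⁻¹ : ℝ))
      (by norm_num) (by norm_num)).const_add (infDist x Y)
  exact ⟨y, hyY, (le_of_tendsto_of_tendsto' (tendsto_const_nhds.dist hy) hlim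
    fun n => (hu n).2.le).antisymm (infDist_le_dist_of_mem hyY)⟩

end OneAndHalfBallProperty

end OneAndHalfBall

section WeaklyNull

variable {ι E F : Type*} [NormedAddCommGroup E] [NormedSpace ℝ E] [NormedAddCommGroup F]
  [NormedSpace ℝ F] {l : Filter ι} {u v : ι → E}

/-- The family `u` converges to `0` along `l` in the weak topology of `E`. Only real functionals
are tested, so that the involution of a C*-algebra, which is merely real linear, preserves this. -/
def WeaklyNull (u : ι → E) (l : Filter ι) : Prop :=
  ∀ φ : StrongDual ℝ E, Tendsto (fun i => φ (u i)) l (𝓝 0)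

namespace WeaklyNull

lemma of_tendsto_zero (h : Tendsto u l (𝓝 0)) : WeaklyNull u l := fun φ =>
  map_zero φ ▸ (φ.continuous.tendsto 0).comp h

lemma add (hu : WeaklyNull u l) (hv : WeaklyNull v l) : WeaklyNull (fun i => u i + v i) l :=
  fun φ => by simpa using (hu φ).add (hv φ)

lemma sub (hu : WeaklyNull u l) (hv : WeaklyNull v l) : WeaklyNull (fun i => u i - v i) l :=
  fun φ => by simpa using (hu φ).sub (hv φ)

lemma sum {κ : Type*} {s : Finset κ} {w : κ → ι → E} (hw : ∀ k ∈ s, WeaklyNull (w k) l) :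
    WeaklyNull (fun i => ∑ k ∈ s, w k i) l :=
  fun φ => by simpa using tendsto_finsetSum s fun k hk => hw k hk φ

lemma const_smul (c : ℝ) (hu : WeaklyNull u l) : WeaklyNull (fun i => c • u i) l :=
  fun φ => by simpa using (hu φ).const_mul c

lemma map (f : E →L[ℝ] F) (hu : WeaklyNull u l) : WeaklyNull (fun i => f (u i)) l :=
  fun φ => hu (φ.comp f)

lemma zero_mem_closure [l.NeBot] (hu : WeaklyNull u l) {S : Set E} (hS : Convex ℝ S)
    (huS : ∀ᶠ i in l, u i ∈ S) : (0 : E) ∈ closure S := by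
  by_contra h0
  obtain ⟨φ, c, hc, hc0⟩ := geometric_hahn_banach_closed_point hS.closure isClosed_closure h0
  rw [map_zero] at hc0
  exact hc0.not_ge <| le_of_tendsto (hu φ) (huS.mono fun i hi => (hc _ (subset_closure hi)).le)

end WeaklyNull

open Pointwise in
lemma exists_mem_ball_inter_ball_of_weaklyNull [l.NeBot] {Y : Set E} (hY : Convex ℝ Y)
    {a b : E} {r s δ : ℝ} (hδ : 0 < δ) {y : ι → E}
    (hyY : ∀ᶠ i in l, y i ∈ Y) (hu : ∀ᶠ i in l, u i ∈ closedBall a r)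
    (hv : ∀ᶠ i in l, v i ∈ closedBall b s) (hyu : WeaklyNull (fun i => y i - u i) l)
    (hyv : WeaklyNull (fun i => y i - v i) l) :
    (Y ∩ ball a (r + δ) ∩ ball b (s + δ)).Nonempty := by
  let diag : E →ₗ[ℝ] E × E := LinearMap.id.prod LinearMap.id
  have hconvex : Convex ℝ (diag '' Y - closedBall a r ×ˢ closedBall b s) :=
    (hY.linear_image diag).sub ((convex_closedBall a r).prod (convex_closedBall b s))
  have hnull : WeaklyNull (fun i => (y i - u i, y i - v i)) l := by
    simpa using (hyu.map (.inl ℝ E E)).add (hyv.map (.inr ℝ E E))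
  have hmem : ∀ᶠ i in l,
      (y i - u i, y i - v i) ∈ diag '' Y - closedBall a r ×ˢ closedBall b s := by
    filter_upwards [hyY, hu, hv] with i hyi hui hvi
    exact Set.sub_mem_sub (Set.mem_image_of_mem diag hyi) (Set.mk_mem_prod hui hvi)
  obtain ⟨_, ⟨_, ⟨z, hzY, rfl⟩, ⟨p, q⟩, ⟨hp, hq⟩, rfl⟩, hdist⟩ :=
    mem_closure_iff.1 (hnull.zero_mem_closure hconvex hmem) δ hδ
  obtain ⟨hzp, hzq⟩ : dist z p < δ ∧ dist z q < δ := by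
    simpa [diag, Prod.dist_eq, dist_eq_norm, norm_sub_rev] using hdist
  refine ⟨z, ⟨hzY, ?_⟩, ?_⟩
  · exact mem_ball.2 (by linarith [dist_triangle z p a, mem_closedBall.1 hp])
  · exact mem_ball.2 (by linarith [dist_triangle z q b, mem_closedBall.1 hq])

end WeaklyNull

section CStarNorm

variable {B : Type*} [CStarAlgebra B] [PartialOrder B] [StarOrderedRing B]

/-- The Cauchy–Schwarz inequality of the Hilbert C*-module `B × B`. -/
lemma norm_mul_add_mul_sq_le (a b c d : B) :
    ‖a * c + b * d‖ ^ 2 ≤ ‖a * star a + b * star b‖ * ‖star c * c + star d * d‖ := by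
  let y : WithCStarModule B (B × B) := (WithCStarModule.equiv B (B × B)).symm (a, b)
  let x : WithCStarModule B (B × B) := (WithCStarModule.equiv B (B × B)).symm (star c, star d)
  have h := pow_le_pow_left₀ (norm_nonneg _)
    (CStarModule.norm_inner_le _ (A := B) (x := x) (y := y)) 2
  rw [mul_pow, WithCStarModule.prod_norm_sq, WithCStarModule.prod_norm_sq, mul_comm] at h
  simpa [x, y, WithCStarModule.prod_inner, WithCStarModule.inner_def] using h

lemma norm_conj_add_conj_le {p q u v : B} {r : ℝ} (hpq : p * star p + q * star q ≤ 1)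
    (hu : ‖u‖ ≤ r) (hv : ‖v‖ ≤ r) : ‖p * u * star p + q * v * star q‖ ≤ r := by
  have hr : 0 ≤ r := (norm_nonneg u).trans hu
  have hconj : ∀ c w : B, ‖w‖ ≤ r → c * w * star (c * w) ≤ r ^ 2 • (c * star c) := by
    intro c w hw
    have : w * star w ≤ algebraMap ℝ B (r ^ 2) :=
      CStarAlgebra.mul_star_le_algebraMap_norm_sq.trans (algebraMap_mono B (by gcongr))
    simpa [mul_assoc, Algebra.algebraMap_eq_smul_one] using star_right_conjugate_le_conjugate this c
  have hnonneg : 0 ≤ p * star p + q * star q :=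
    add_nonneg (mul_star_self_nonneg p) (mul_star_self_nonneg q)
  have hleft : ‖p * u * star (p * u) + q * v * star (q * v)‖ ≤ r ^ 2 := by
    rw [CStarAlgebra.norm_le_iff_le_algebraMap _ (by positivity)
      (add_nonneg (mul_star_self_nonneg _) (mul_star_self_nonneg _)),
      Algebra.algebraMap_eq_smul_one]
    calc _ ≤ r ^ 2 • (p * star p + q * star q) := by
          rw [smul_add]; exact add_le_add (hconj p u hu) (hconj q v hv)
      _ ≤ r ^ 2 • 1 := by gcongr
  have hright : ‖p * star p + q * star q‖ ≤ 1 :=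
    (CStarAlgebra.norm_le_one_iff_of_nonneg _ hnonneg).2 hpq
  refine (pow_le_pow_iff_left₀ (norm_nonneg _) hr two_ne_zero).1 ?_
  calc _ ≤ ‖p * u * star (p * u) + q * v * star (q * v)‖ * ‖p * star p + q * star q‖ := by
        simpa only [star_star] using norm_mul_add_mul_sq_le (p * u) (q * v) (star p) (star q)
    _ ≤ r ^ 2 * 1 := by gcongr
    _ = r ^ 2 := mul_one _

lemma norm_conj_add_one_sub_conj_le {e u v : B} {r : ℝ} (he0 : 0 ≤ e) (he1 : e ≤ 1)
    (hu : ‖u‖ ≤ r) (hv : ‖v‖ ≤ r) : ‖e * u * e + (1 - e) * v * (1 - e)‖ ≤ r := by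
  have hsq : ∀ c : B, 0 ≤ c → c ≤ 1 → c * c ≤ c := fun c hc0 hc1 => by
    simpa [sq] using CStarAlgebra.pow_antitone hc0 hc1 one_le_two
  have hstar : star e = e := (IsSelfAdjoint.of_nonneg he0).star_eq
  have hweight : e * star e + (1 - e) * star (1 - e) ≤ 1 := by
    rw [star_sub, star_one, hstar]
    simpa using add_le_add (hsq e he0 he1) (hsq (1 - e) (sub_nonneg.2 he1) (sub_le_self 1 he0))
  simpa [hstar] using norm_conj_add_conj_le hweight hu hv

end CStarNorm

section StrictlyNull

variable {D : Type*} [NonUnitalCStarAlgebra D]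

lemma norm_add_smul_sq_le (g v : D) (c : ℝ) :
    ‖g + c • v‖ ^ 2 ≤ ‖g‖ ^ 2 + 2 * |c| * ‖star g * v‖ + c ^ 2 * ‖v‖ ^ 2 := by
  have hexpand : star (g + c • v) * (g + c • v) = star g * g + c • (star g * v)
      + c • star (star g * v) + c ^ 2 • (star v * v) := by
    simp only [star_add, star_smul, star_mul, star_star, star_trivial, add_mul, mul_add,
      smul_mul_assoc, mul_smul_comm]
    module
  calc ‖g + c • v‖ ^ 2 = ‖star (g + c • v) * (g + c • v)‖ := by
        rw [CStarRing.norm_star_mul_self, sq]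
    _ ≤ ‖star g * g‖ + ‖c • (star g * v)‖ + ‖c • star (star g * v)‖ + ‖c ^ 2 • (star v * v)‖ := by
        rw [hexpand]; exact norm_add₄_le
    _ = _ := by
        simp only [norm_smul, norm_star, CStarRing.norm_star_mul_self, Real.norm_eq_abs, abs_pow,
          sq_abs]
        ring

/-- A large value `φ v` would make `φ` exceed its norm at `g + τ v` or `g - τ v`, if `g` nearly
norms `φ` and `v` is nearly orthogonal to `g`. -/
lemma mul_abs_apply_le (φ : StrongDual ℝ D) {g : D} (hg : ‖g‖ ≤ 1) (v : D) {τ : ℝ} (hτ : 0 ≤ τ) :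
    τ * |φ v| ≤ ‖φ‖ - φ g + ‖φ‖ * (τ * ‖star g * v‖ + τ ^ 2 * ‖v‖ ^ 2 / 2) := by
  have hbound : ∀ c : ℝ, |c| = τ →
      c * φ v ≤ ‖φ‖ - φ g + ‖φ‖ * (τ * ‖star g * v‖ + τ ^ 2 * ‖v‖ ^ 2 / 2) := by
    rintro c rfl
    have hsq : ‖g + c • v‖ ^ 2 ≤ 1 + 2 * |c| * ‖star g * v‖ + c ^ 2 * ‖v‖ ^ 2 :=
      (norm_add_smul_sq_le g v c).trans (by gcongr; exact pow_le_one₀ (norm_nonneg g) hg)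
    have hnorm : ‖g + c • v‖ ≤ 1 + (|c| * ‖star g * v‖ + c ^ 2 * ‖v‖ ^ 2 / 2) := by
      nlinarith [sq_nonneg (‖g + c • v‖ - 1)]
    calc c * φ v = φ (g + c • v) - φ g := by simp
      _ ≤ ‖φ‖ * (1 + (|c| * ‖star g * v‖ + c ^ 2 * ‖v‖ ^ 2 / 2)) - φ g := by
        gcongr
        exact (le_abs_self _).trans (φ.le_opNorm_of_le hnorm)
      _ = _ := by rw [sq_abs]; ring
  rcases abs_choice (φ v) with h | h <;> rw [h]
  · exact hbound τ (abs_of_nonneg hτ)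
  · simpa using hbound (-τ) (by rw [abs_neg, abs_of_nonneg hτ])

lemma exists_norm_le_one_lt_apply {E : Type*} [NormedAddCommGroup E] [NormedSpace ℝ E]
    (φ : StrongDual ℝ E) {ε : ℝ} (hε : 0 < ε) : ∃ g : E, ‖g‖ ≤ 1 ∧ ‖φ‖ - ε < φ g := by
  obtain ⟨g, hg, hφg⟩ := φ.exists_lt_apply_of_lt_opNorm (sub_lt_self ‖φ‖ hε)
  rcases abs_choice (φ g) with h | h <;> rw [Real.norm_eq_abs, h] at hφg
  · exact ⟨g, hg.le, hφg⟩
  · exact ⟨-g, by simpa using hg.le, by simpa using hφg⟩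

lemma WeaklyNull.of_tendsto_mul_zero {ι : Type*} {l : Filter ι} {u : ι → D} {R : ℝ}
    (hR : ∀ᶠ i in l, ‖u i‖ ≤ R) (hu : ∀ g : D, Tendsto (fun i => g * u i) l (𝓝 0)) :
    WeaklyNull u l := by
  intro φ
  rw [Metric.tendsto_nhds]
  intro ε hε
  obtain ⟨τ, hτ, hτε⟩ : ∃ τ > 0, ‖φ‖ * R ^ 2 / 2 * τ < ε / 2 :=
    exists_pos_mul_lt (half_pos hε) _
  obtain ⟨g, hg, hφg⟩ := exists_norm_le_one_lt_apply φ (mul_pos hτ (by positivity : 0 < ε / 4))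
  have horth : ∀ᶠ i in l, ‖φ‖ * ‖star g * u i‖ < ε / 4 := by
    have := (hu (star g)).norm.const_mul ‖φ‖
    rw [norm_zero, mul_zero] at this
    exact this.eventually_lt_const (by positivity)
  filter_upwards [hR, horth] with i hi hgi
  rw [Real.dist_0_eq_abs]
  refine lt_of_mul_lt_mul_left ?_ hτ.le
  calc τ * |φ (u i)|
      ≤ ‖φ‖ - φ g + ‖φ‖ * (τ * ‖star g * u i‖ + τ ^ 2 * ‖u i‖ ^ 2 / 2) :=
        mul_abs_apply_le φ hg (u i) hτ.le
    _ ≤ ‖φ‖ - φ g + ‖φ‖ * (τ * ‖star g * u i‖ + τ ^ 2 * R ^ 2 / 2) := by gcongr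
    _ = (‖φ‖ - φ g) + τ * (‖φ‖ * ‖star g * u i‖ + ‖φ‖ * R ^ 2 / 2 * τ) := by ring
    _ < τ * (ε / 4) + τ * (ε / 4 + ε / 2) := by gcongr; linarith
    _ = τ * ε := by ring

end StrictlyNull

lemma exists_isApproximateUnit_star_mul_self (D : Type*) [NonUnitalCStarAlgebra D] :
    ∃ l : Filter D, l.IsApproximateUnit ∧ ∀ᶠ e in l, ‖e‖ ≤ 1 ∧ ∃ y, e = star y * y := by
  let _ := CStarAlgebra.spectralOrder D
  let _ := CStarAlgebra.spectralOrderedRing D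
  have hl := CStarAlgebra.increasingApproximateUnit D
  refine ⟨CStarAlgebra.approximateUnit D, hl.toIsApproximateUnit, ?_⟩
  filter_upwards [hl.eventually_nonneg, hl.eventually_norm] with e he0 he1
  exact ⟨he1, CStarAlgebra.nonneg_iff_eq_star_mul_self.1 he0⟩

lemma exists_mem_Icc_mul_add_eq {r s : ℝ} (hr : 0 ≤ r) (hs : 0 < s) :
    ∃ t ∈ Set.Icc (0 : ℝ) 1, t * (r + s) = s ∧ (1 - t) * (r + s) = r :=
  ⟨s / (r + s), ⟨by positivity, (div_le_one (by positivity)).2 (by linarith)⟩,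
    by field_simp, by field_simp; ring⟩

section IdealInUnital

variable {B : Type*} [CStarAlgebra B] {D : NonUnitalStarSubalgebra ℂ B}

lemma exists_isApproximateUnit_mem_Icc [PartialOrder B] [StarOrderedRing B]
    (D : NonUnitalStarSubalgebra ℂ B) [IsClosed (D : Set B)] :
    ∃ l : Filter D, l.IsApproximateUnit ∧ ∀ᶠ e : D in l, (e : B) ∈ Set.Icc 0 1 := by
  obtain ⟨l, hl, hle⟩ := exists_isApproximateUnit_star_mul_self D
  refine ⟨l, hl, hle.mono ?_⟩
  rintro _ ⟨hnorm, y, rfl⟩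
  have hnonneg : 0 ≤ ((star y * y : D) : B) := star_mul_self_nonneg (y : B)
  exact ⟨hnonneg, (CStarAlgebra.norm_le_one_iff_of_nonneg _ hnonneg).1 hnorm⟩

lemma weaklyNull_coe {ι : Type*} {u : ι → D} {l : Filter ι} (hu : WeaklyNull u l) :
    WeaklyNull (fun i => (u i : B)) l :=
  hu.map (D.toSubmodule.restrictScalars ℝ).subtypeL

lemma mul_mem_of_forall_mul_mem (hD : ∀ b, ∀ x ∈ D, b * x ∈ D) {x : B} (hx : x ∈ D) (b : B) :
    x * b ∈ D := by
  simpa using star_mem (hD (star b) _ (star_mem hx))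

variable [PartialOrder B] [StarOrderedRing B] [IsClosed (D : Set B)] {l : Filter D}

lemma norm_le_one_of_mem_Icc {e : B} (he : e ∈ Set.Icc 0 1) : ‖e‖ ≤ 1 :=
  (CStarAlgebra.norm_le_one_iff_of_nonneg e he.1).2 he.2

lemma weaklyNull_one_sub_mul_mul (hD : ∀ b, ∀ x ∈ D, b * x ∈ D) (hl : l.IsApproximateUnit)
    (hle : ∀ᶠ e : D in l, (e : B) ∈ Set.Icc 0 1) (a : B) :
    WeaklyNull (fun e : D => (1 - (e : B)) * a * e) l := by
  let u : D → D := fun e => ⟨(1 - (e : B)) * a * e, hD _ _ e.2⟩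
  refine weaklyNull_coe (u := u) (.of_tendsto_mul_zero (R := ‖a‖) ?_ fun g => ?_)
  · filter_upwards [hle] with e he
    calc ‖(1 - (e : B)) * a * e‖ ≤ ‖1 - (e : B)‖ * ‖a‖ * ‖(e : B)‖ := norm_mul₃_le
      _ ≤ 1 * ‖a‖ * 1 := by
        gcongr
        · exact norm_le_one_of_mem_Icc ⟨sub_nonneg.2 he.2, sub_le_self 1 he.1⟩
        · exact norm_le_one_of_mem_Icc he
      _ = ‖a‖ := by ring
  · have hg : Tendsto (fun e : D => ‖g - g * e‖ * ‖a‖) l (𝓝 0) := by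
      simpa using ((hl.tendsto_mul_left g).const_sub g).norm.mul_const ‖a‖
    refine squeeze_zero_norm' ?_ hg
    filter_upwards [hle] with e he
    calc ‖g * u e‖ = ‖((g : B) - g * e) * a * e‖ := by
          change ‖(g : B) * ((1 - e) * a * e)‖ = _
          congr 1
          noncomm_ring
      _ ≤ ‖g - g * e‖ * ‖a‖ * ‖(e : B)‖ := norm_mul₃_le
      _ ≤ ‖g - g * e‖ * ‖a‖ :=
        mul_le_of_le_one_right (by positivity) (norm_le_one_of_mem_Icc he)

lemma weaklyNull_mul_mul_one_sub (hD : ∀ b, ∀ x ∈ D, b * x ∈ D) (hl : l.IsApproximateUnit)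
    (hle : ∀ᶠ e : D in l, (e : B) ∈ Set.Icc 0 1) (a : B) :
    WeaklyNull (fun e : D => (e : B) * a * (1 - e)) l := by
  have hstar := (weaklyNull_one_sub_mul_mul hD hl hle (star a)).map
    (starL' ℝ : B ≃L[ℝ] B).toContinuousLinearMap
  refine fun φ => (hstar φ).congr' ?_
  filter_upwards [hle] with e he
  simp [(IsSelfAdjoint.of_nonneg he.1).star_eq, mul_assoc]

lemma weaklyNull_one_sub_mul_mul_one_sub (hD : ∀ b, ∀ x ∈ D, b * x ∈ D) (hl : l.IsApproximateUnit)
    (hle : ∀ᶠ e : D in l, (e : B) ∈ Set.Icc 0 1) {y : B} (hy : y ∈ D) :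
    WeaklyNull (fun e : D => (1 - (e : B)) * y * (1 - e)) l := by
  have hleft : WeaklyNull (fun e : D => (1 - (e : B)) * y) l := .of_tendsto_zero <| by
    have := (hl.tendsto_mul_right ⟨y, hy⟩).const_sub (⟨y, hy⟩ : D)
    rw [sub_self] at this
    simpa [sub_mul, Function.comp_def] using (continuous_subtype_val.tendsto _).comp this
  simpa [mul_sub] using hleft.sub (weaklyNull_one_sub_mul_mul hD hl hle y)

lemma weaklyNull_mul_sub_mul (hD : ∀ b, ∀ x ∈ D, b * x ∈ D) (hl : l.IsApproximateUnit)
    (hle : ∀ᶠ e : D in l, (e : B) ∈ Set.Icc 0 1) (a : B) :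
    WeaklyNull (fun e : D => a * e - e * a) l := by
  simpa [sub_mul, mul_sub] using (weaklyNull_one_sub_mul_mul hD hl hle a).sub
    (weaklyNull_mul_mul_one_sub hD hl hle a)

/-- Modulo weakly null terms, `e` acts as a central projection that is the unit of `D`. -/
lemma weaklyNull_sub_conj_sub_conj (hD : ∀ b, ∀ x ∈ D, b * x ∈ D) (hl : l.IsApproximateUnit)
    (hle : ∀ᶠ e : D in l, (e : B) ∈ Set.Icc 0 1) (z : B) {y : B} (hy : y ∈ D) (t : ℝ) :
    WeaklyNull (fun e : D => z - e * (t • z) - e * ((1 - t) • z) * e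
      - (1 - (e : B)) * (z - y) * (1 - e)) l := by
  have h := (((weaklyNull_mul_mul_one_sub hD hl hle z).const_smul (1 - t)).add
    (weaklyNull_one_sub_mul_mul hD hl hle z)).add
    (weaklyNull_one_sub_mul_mul_one_sub hD hl hle hy)
  refine fun φ => (h φ).congr fun e => congrArg φ ?_
  simp only [mul_sub, sub_mul, mul_one, one_mul, mul_smul_comm, smul_mul_assoc, smul_sub, sub_smul,
    one_smul]
  abel

/-- Let `x = T x₀`, `y = T y₀`, `p = T p₀` with `p` the given point of `T '' D` near `x`, and let
`z₀ = x₀ - y₀`, `z = T z₀` and `t = s / (r + s)`. Along `e`, the points `T (y₀ + e * (t • z₀))` of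
`T '' D` are weakly asymptotic both to `y + e * (t • z)`, which is close to `y`, and to
`x - (e * ((1 - t) • z) * e + (1 - e) * (x - p) * (1 - e))`, which is close to `x`. -/
lemma oneAndHalfBallProperty_image (hD : ∀ b, ∀ x ∈ D, b * x ∈ D) (hl : l.IsApproximateUnit)
    (hle : ∀ᶠ e : D in l, (e : B) ∈ Set.Icc 0 1) {T : B →ₗ[ℝ] B} (hTD : ∀ x ∈ D, T x ∈ D)
    (hT : ∀ x, WeaklyNull (fun e : D => T (e * x) - e * T x) l) :
    OneAndHalfBallProperty (T '' D) (Set.range T) := by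
  have := hl.neBot
  have hconvex : Convex ℝ (T '' D) := (D.toSubmodule.restrictScalars ℝ).convex.linear_image T
  refine .of_forall_pos_add ?_
  rintro _ ⟨x₀, rfl⟩ _ ⟨y₀, hy₀, rfl⟩ _ ⟨p₀, hp₀, rfl⟩ r s δ hxp hs hxy hδ
  obtain ⟨t, ⟨ht0, ht1⟩, hts, htr⟩ := exists_mem_Icc_mul_add_eq (dist_nonneg.trans hxp) hs
  set z := T (x₀ - y₀) with hz
  have hz_norm : ‖z‖ ≤ r + s := by rwa [hz, map_sub, ← dist_eq_norm]
  have hsmul_norm : ∀ c : ℝ, 0 ≤ c → ‖c • z‖ ≤ c * (r + s) := fun c hc => by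
    rw [norm_smul, Real.norm_of_nonneg hc]
    gcongr
  have hcomm := hT (t • (x₀ - y₀))
  refine exists_mem_ball_inter_ball_of_weaklyNull hconvex hδ (l := l)
    (y := fun e => T (y₀ + e * (t • (x₀ - y₀))))
    (u := fun e => T x₀ - (e * ((1 - t) • z) * e + (1 - (e : B)) * (T x₀ - T p₀) * (1 - e)))
    (v := fun e => T y₀ + e * (t • z)) ?_ ?_ ?_ ?_ ?_
  · exact .of_forall fun e => Set.mem_image_of_mem T <|
      add_mem hy₀ (mul_mem_of_forall_mul_mem hD e.2 _)
  · filter_upwards [hle] with e he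
    rw [mem_closedBall, dist_eq_norm, sub_sub_cancel_left, norm_neg]
    exact norm_conj_add_one_sub_conj_le he.1 he.2 ((hsmul_norm _ (sub_nonneg.2 ht1)).trans_eq htr)
      (by rwa [← dist_eq_norm])
  · filter_upwards [hle] with e he
    rw [mem_closedBall, dist_eq_norm, add_sub_cancel_left, ← one_mul s, ← hts]
    exact norm_mul_le_of_le (norm_le_one_of_mem_Icc he) (hsmul_norm t ht0)
  · have hcompress := weaklyNull_sub_conj_sub_conj hD hl hle z
      (sub_mem (hTD p₀ hp₀) (hTD y₀ hy₀)) t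
    refine fun φ => ((hcomm.sub hcompress) φ).congr fun e => congrArg φ ?_
    simp only [hz, map_add, map_smul, map_sub, sub_sub_sub_cancel_right]
    abel
  · refine fun φ => (hcomm φ).congr fun e => congrArg φ ?_
    simp only [hz, map_add, map_smul, add_sub_add_left_eq_sub]

end IdealInUnital

section ElementaryOperator

variable {ι B : Type*} [Fintype ι] [CStarAlgebra B] (a b : ι → B)

/-- The elementary operator `x ↦ ∑ i, a i * x * b i` with coefficients `a` and `b`. -/
noncomputable def elementaryOperator : B →ₗ[ℂ] B :=
  ∑ i, LinearMap.mulLeftRight ℂ (a i, b i)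

lemma elementaryOperator_apply (x : B) : elementaryOperator a b x = ∑ i, a i * x * b i := by
  simp [elementaryOperator]

variable {D : NonUnitalStarSubalgebra ℂ B}

lemma elementaryOperator_mem (hD : ∀ c, ∀ x ∈ D, c * x ∈ D) {x : B} (hx : x ∈ D) :
    elementaryOperator a b x ∈ D := by
  rw [elementaryOperator_apply]
  exact sum_mem fun i _ => mul_mem_of_forall_mul_mem hD (hD _ _ hx) _

lemma weaklyNull_elementaryOperator_mul_sub [PartialOrder B] [StarOrderedRing B]
    [IsClosed (D : Set B)] {l : Filter D} (hD : ∀ c, ∀ x ∈ D, c * x ∈ D)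
    (hl : l.IsApproximateUnit) (hle : ∀ᶠ e : D in l, (e : B) ∈ Set.Icc 0 1) (x : B) :
    WeaklyNull (fun e : D => elementaryOperator a b (e * x) - e * elementaryOperator a b x) l := by
  have hterm : ∀ i, WeaklyNull (fun e : D => (a i * e - e * a i) * (x * b i)) l := fun i =>
    (weaklyNull_mul_sub_mul hD hl hle (a i)).map ((ContinuousLinearMap.mul ℝ B).flip (x * b i))
  simpa only [elementaryOperator_apply, Finset.mul_sum, ← Finset.sum_sub_distrib, sub_mul,
    mul_assoc] using WeaklyNull.sum fun i (_ : i ∈ Finset.univ) => hterm i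

lemma oneAndHalfBallProperty_elementaryOperator [IsClosed (D : Set B)]
    (hD : ∀ c, ∀ x ∈ D, c * x ∈ D) :
    OneAndHalfBallProperty (elementaryOperator a b '' D) (Set.range (elementaryOperator a b)) := by
  let _ := CStarAlgebra.spectralOrder B
  let _ := CStarAlgebra.spectralOrderedRing B
  obtain ⟨l, hl, hle⟩ := exists_isApproximateUnit_mem_Icc D
  exact oneAndHalfBallProperty_image hD hl hle
    (T := (elementaryOperator a b).restrictScalars ℝ) (fun _ => elementaryOperator_mem a b hD)
    (weaklyNull_elementaryOperator_mul_sub a b hD hl hle)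

end ElementaryOperator

section ClosureIdeal

variable {A : Type*} [NonUnitalCStarAlgebra A]

lemma norm_sub_mul_sq_le {e : A} (he : ‖e‖ ≤ 1) (x : A) :
    ‖x - e * x‖ ^ 2 ≤ 2 * ‖x * star x - e * (x * star x)‖ := by
  set y := x * star x - e * (x * star x) with hy
  calc ‖x - e * x‖ ^ 2 = ‖y - y * star e‖ := by
        rw [sq, ← CStarRing.norm_self_mul_star, hy]
        simp only [star_sub, star_mul, sub_mul, mul_sub, mul_assoc]
    _ ≤ ‖y‖ + ‖y‖ * ‖star e‖ := (norm_sub_le _ _).trans (by gcongr; exact norm_mul_le _ _)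
    _ ≤ ‖y‖ + ‖y‖ * 1 := by gcongr; rwa [norm_star]
    _ = 2 * ‖y‖ := by ring

variable (I : TwoSidedIdeal A)

lemma mul_mem_closure_left (b : A) {x : A} (hx : x ∈ closure (I : Set A)) :
    b * x ∈ closure (I : Set A) :=
  map_mem_closure (continuous_const_mul b) hx fun y hy => I.mul_mem_left b y hy

lemma mul_mem_closure_right (b : A) {x : A} (hx : x ∈ closure (I : Set A)) :
    x * b ∈ closure (I : Set A) :=
  map_mem_closure (f := (· * b)) (continuous_mul_const b) hx fun y hy => I.mul_mem_right y b hy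

lemma add_mem_closure {x y : A} (hx : x ∈ closure (I : Set A)) (hy : y ∈ closure (I : Set A)) :
    x + y ∈ closure (I : Set A) :=
  map_mem_closure₂ continuous_add hx hy fun _ hx' _ hy' => I.add_mem hx' hy'

lemma smul_mem_closure (c : ℂ) {x : A} (hx : x ∈ closure (I : Set A)) :
    c • x ∈ closure (I : Set A) := by
  obtain ⟨l, hl, -⟩ := exists_isApproximateUnit_star_mul_self A
  have := hl.neBot
  refine isClosed_closure.mem_of_tendsto ((hl.tendsto_mul_left x).const_smul c)
    (.of_forall fun e => ?_)
  rw [← mul_smul_comm]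
  exact mul_mem_closure_right I _ hx

/-- The largest *-subalgebra inside the closure of `I`. It is all of the closure, since closed
ideals of C*-algebras are self-adjoint. -/
def closureStarSubalgebra : NonUnitalStarSubalgebra ℂ A where
  carrier := {x | x ∈ closure (I : Set A) ∧ star x ∈ closure (I : Set A)}
  add_mem' hx hy :=
    ⟨add_mem_closure I hx.1 hy.1, star_add (_ : A) _ ▸ add_mem_closure I hx.2 hy.2⟩
  zero_mem' := ⟨subset_closure I.zero_mem, (star_zero A).symm ▸ subset_closure I.zero_mem⟩
  mul_mem' hx hy :=
    ⟨mul_mem_closure_left I _ hy.1, star_mul (_ : A) _ ▸ mul_mem_closure_left I _ hx.2⟩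
  smul_mem' c _ hx :=
    ⟨smul_mem_closure I c hx.1, star_smul c (_ : A) ▸ smul_mem_closure I _ hx.2⟩
  star_mem' hx := ⟨hx.2, (star_star (_ : A)).symm ▸ hx.1⟩

instance isClosed_closureStarSubalgebra : IsClosed (closureStarSubalgebra I : Set A) :=
  isClosed_closure.inter (isClosed_closure.preimage continuous_star)

lemma star_mem_closure {x : A} (hx : x ∈ closure (I : Set A)) : star x ∈ closure (I : Set A) := by
  obtain ⟨l, hl, hle⟩ := exists_isApproximateUnit_star_mul_self (closureStarSubalgebra I)
  have := hl.neBot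
  have hxx : x * star x ∈ closureStarSubalgebra I :=
    ⟨mul_mem_closure_right I _ hx, by simpa using mul_mem_closure_right I (star x) hx⟩
  have hbound : Tendsto (fun e : closureStarSubalgebra I =>
      2 * ‖x * star x - e * (x * star x)‖) l (𝓝 0) := by
    have h := ((continuous_subtype_val.tendsto _).comp (hl.tendsto_mul_right ⟨_, hxx⟩)).const_sub
      (x * star x)
    simpa [Function.comp_def] using h.norm.const_mul 2
  have hlim : Tendsto (fun e : closureStarSubalgebra I => (e : A) * x) l (𝓝 x) := by
    have hsq : Tendsto (fun e : closureStarSubalgebra I => ‖x - e * x‖ ^ 2) l (𝓝 0) :=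
      squeeze_zero' (.of_forall fun _ => sq_nonneg _)
        (hle.mono fun e he => norm_sub_mul_sq_le (e := (e : A)) he.1 x) hbound
    rw [tendsto_iff_norm_sub_tendsto_zero]
    simpa [norm_sub_rev] using hsq.sqrt
  refine isClosed_closure.mem_of_tendsto hlim.star (.of_forall fun e => ?_)
  rw [star_mul]
  exact mul_mem_closure_left I _ e.2.2

lemma coe_closureStarSubalgebra : (closureStarSubalgebra I : Set A) = closure I :=
  Set.Subset.antisymm (fun _ hx => hx.1) fun _ hx => ⟨hx, star_mem_closure I hx⟩

/-- The closure of `I`, as a *-subalgebra of the unitization. -/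
def unitizationClosureIdeal : NonUnitalStarSubalgebra ℂ (Unitization ℂ A) :=
  (closureStarSubalgebra I).map (Unitization.inrNonUnitalStarAlgHom ℂ A)

lemma coe_unitizationClosureIdeal :
    (unitizationClosureIdeal I : Set (Unitization ℂ A)) =
      (fun x : A => (x : Unitization ℂ A)) '' closure I := by
  rw [unitizationClosureIdeal, NonUnitalStarSubalgebra.coe_map, coe_closureStarSubalgebra]
  rfl

instance isClosed_unitizationClosureIdeal :
    IsClosed (unitizationClosureIdeal I : Set (Unitization ℂ A)) := by
  rw [coe_unitizationClosureIdeal]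
  exact (Unitization.isometry_inr (𝕜 := ℂ)).isClosedEmbedding.isClosedMap _ isClosed_closure

lemma mul_mem_unitizationClosureIdeal (c x : Unitization ℂ A)
    (hx : x ∈ unitizationClosureIdeal I) : c * x ∈ unitizationClosureIdeal I := by
  rw [← SetLike.mem_coe, coe_unitizationClosureIdeal] at hx ⊢
  obtain ⟨y, hy, rfl⟩ := hx
  refine ⟨c.fst • y + c.snd * y, ?_, by ext <;> simp⟩
  exact add_mem_closure I (smul_mem_closure I _ hy) (mul_mem_closure_left I _ hy)

end ClosureIdeal

theorem stmt_0_general {A ι : Type*} [NonUnitalCStarAlgebra A] [Fintype ι] (I : TwoSidedIdeal A)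
    (a b : ι → Unitization ℂ A) (T : A → A)
    (hT : ∀ x : A, (T x : Unitization ℂ A) = ∑ i, a i * (x : Unitization ℂ A) * b i) :
    ∀ x ∈ closure (Set.range T), ∃ y ∈ closure (T '' (I : Set A)),
      ‖x - y‖ = Metric.infDist x (closure (T '' (I : Set A))) := by
  intro x hx
  have hinr : Isometry (Unitization.inr : A → Unitization ℂ A) := Unitization.isometry_inr
  have hT_inr : ∀ x : A, (T x : Unitization ℂ A) = elementaryOperator a b x := fun x => by
    rw [hT, elementaryOperator_apply]
  have hT_cont : Continuous T := hinr.isEmbedding.continuous_iff.2 <| by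
    simp only [Function.comp_def, hT]
    have := hinr.continuous
    fun_prop
  have hball : OneAndHalfBallProperty (T '' closure I) (Set.range T) := by
    refine .of_image hinr ?_
    have h := oneAndHalfBallProperty_elementaryOperator a b (mul_mem_unitizationClosureIdeal I)
    simp only [coe_unitizationClosureIdeal, Set.image_image, ← hT_inr] at h
    rw [Set.image_image]
    refine h.mono_right ?_
    rintro _ ⟨_, ⟨z, rfl⟩, rfl⟩
    exact ⟨z, (hT_inr z).symm⟩
  have hne : (T '' closure (I : Set A)).Nonempty := ⟨T 0, 0, subset_closure I.zero_mem, rfl⟩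
  obtain ⟨y, hy, hxy⟩ := hball.closure.exists_dist_eq_infDist isClosed_closure hne.closure hx
  rw [closure_image_closure hT_cont] at hy hxy
  exact ⟨y, hy, by rw [← dist_eq_norm, hxy]⟩

/-- Let `A` be a C*-algebra, `I` a closed two-sided ideal of `A`, and
`T : A → A` an elementary operator, i.e. `T x = ∑ i, a i * x * b i` with coefficients in the
minimal unitization `Unitization ℂ A`. Then the closure of `T '' I` is proximinal in the
closure of the range of `T`. -/
theorem stmt_0 {A : Type*} [NonUnitalCStarAlgebra A]
    (I : TwoSidedIdeal A) (hI : IsClosed (I : Set A))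
    (N : ℕ) (a b : Fin N → Unitization ℂ A) (T : A → A)
    (hT : ∀ x : A, (T x : Unitization ℂ A) = ∑ i, a i * (x : Unitization ℂ A) * b i) :
    ∀ x ∈ closure (Set.range T), ∃ y ∈ closure (T '' (I : Set A)),
      ‖x - y‖ = Metric.infDist x (closure (T '' (I : Set A))) :=
  stmt_0_general I a b T hT
end

section
/- Let A be a C*-algebra, I a closed two-sided ideal of A, q : A → A/I the quotient map, and a ∈ A with image ȧ = q(a). Then q maps the hereditary C*-subalgebra closure(aAa) onto closure(ȧ(A/I)ȧ), and the kernel of the restriction of q to closure(aAa) is closure(aIa); consequently closure(ȧ(A/I)ȧ) is *-isomorphic to closure(aAa)/closure(aIa). -/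
/-!
Functional calculus in `a a*` and `b* b` gives contractions `a uₙ` and `vₙ b` such that
`a uₙ x vₙ b → x` for every `x ∈ closure (aAb)`. If `x` lies in an ideal `I`, then so does
`uₙ x vₙ`, which exhibits `x` as a limit of elements of `aIb`.

If `x ∈ aAb` and `y` is any element congruent to `x` modulo `I`, then `x - a uₙ (x - y) vₙ b` is
an element of `aAb` in the same class, and its norm is eventually less than `‖y‖ + ε`. Hence the
norm-controlled lifts along `q` given by the open mapping theorem can be taken in `aAb`, and
summing a series of such lifts produces lifts in the complete space `closure (aAb)`.
-/

open Filter Topology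
open scoped CStarAlgebra

section Corner

/-- The set `aAb` of all products `a * y * b`, as an additive subgroup. Neither `a` nor `b` has to
be idempotent. -/
def twoSidedCorner {A : Type*} [NonUnitalRing A] (a b : A) : AddSubgroup A :=
  ((AddMonoidHom.mulRight b).comp (AddMonoidHom.mulLeft a)).range

variable {A B : Type*} [NonUnitalRing A] [NonUnitalRing B]

lemma mem_twoSidedCorner {a b x : A} : x ∈ twoSidedCorner a b ↔ ∃ y, a * y * b = x := Iff.rfl

lemma coe_twoSidedCorner (a b : A) : (twoSidedCorner a b : Set A) = {x | ∃ y, x = a * y * b} :=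
  Set.ext fun _ => exists_congr fun _ => eq_comm

lemma image_twoSidedCorner {F : Type*} [FunLike F A B] [NonUnitalRingHomClass F A B] {q : F}
    (hq : Function.Surjective q) (a b : A) :
    q '' twoSidedCorner a b = twoSidedCorner (q a) (q b) := by
  ext z
  simp only [Set.mem_image, SetLike.mem_coe, mem_twoSidedCorner, hq.exists, ← map_mul]
  simp

end Corner

section Approximation

lemma tendsto_mul_of_tendsto_mul_mul_star {ι A : Type*} [NonUnitalNormedRing A] [StarRing A]
    [CStarRing A] {l : Filter ι} {e : ι → A} {a : A} (he : ∀ i, ‖e i‖ ≤ 1)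
    (h : Tendsto (fun i => e i * (a * star a)) l (𝓝 (a * star a))) :
    Tendsto (fun i => e i * a) l (𝓝 a) := by
  have norm_sq_le (i : ι) :
      ‖e i * a - a‖ ^ 2 ≤ 2 * ‖e i * (a * star a) - a * star a‖ := by
    set d := e i * (a * star a) - a * star a with hd
    calc ‖e i * a - a‖ ^ 2 = ‖(e i * a - a) * star (e i * a - a)‖ := by
          rw [CStarRing.norm_self_mul_star, sq]
      _ = ‖d * star (e i) - d‖ := by
          rw [hd, star_sub, star_mul]; noncomm_ring
      _ ≤ ‖d‖ * ‖star (e i)‖ + ‖d‖ := (norm_sub_le _ _).trans (by gcongr; exact norm_mul_le _ _)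
      _ ≤ ‖d‖ * 1 + ‖d‖ := by gcongr; simpa using he i
      _ = 2 * ‖d‖ := by ring
  rw [tendsto_iff_norm_sub_tendsto_zero] at h ⊢
  have sq_tendsto : Tendsto (fun i => ‖e i * a - a‖ ^ 2) l (𝓝 0) :=
    squeeze_zero (fun _ => by positivity) norm_sq_le (by simpa using h.const_mul 2)
  simpa using sq_tendsto.sqrt

lemma tendsto_mul_mul_of_mem_closure_twoSidedCorner {ι A : Type*} [NonUnitalNormedRing A]
    {l : Filter ι} {e f : ι → A} {a b : A} (he : ∀ i, ‖e i‖ ≤ 1) (hf : ∀ i, ‖f i‖ ≤ 1)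
    (hea : Tendsto (fun i => e i * a) l (𝓝 a)) (hbf : Tendsto (fun i => b * f i) l (𝓝 b))
    {x : A} (hx : x ∈ closure (twoSidedCorner a b : Set A)) :
    Tendsto (fun i => e i * x * f i) l (𝓝 x) := by
  have lipschitz (i : ι) : LipschitzWith 1 fun x => e i * x * f i :=
    LipschitzWith.of_dist_le_mul fun x y => by
      rw [dist_eq_norm, dist_eq_norm, ← sub_mul, ← mul_sub]
      calc ‖e i * (x - y) * f i‖ ≤ ‖e i‖ * ‖x - y‖ * ‖f i‖ := norm_mul₃_le
        _ ≤ 1 * ‖x - y‖ * 1 := by gcongr <;> simp only [he, hf]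
        _ = (1 : NNReal) * ‖x - y‖ := by simp
  have isClosed_setOf_tendsto : IsClosed {x | Tendsto (fun i => e i * x * f i) l (𝓝 x)} :=
    (LipschitzWith.uniformEquicontinuous _ 1 lipschitz).equicontinuous.isClosed_setOfPred_tendsto
      continuous_id
  refine closure_minimal ?_ isClosed_setOf_tendsto hx
  rintro _ ⟨y, rfl⟩
  simpa [mul_assoc] using (hea.mul_const y).mul hbf

variable {A : Type*} [NonUnitalCStarAlgebra A]

-- `k` is the Tikhonov-regularised inverse `h / (h² + s²)`.
lemma exists_norm_mul_le_one_norm_mul_mul_sub_le {h : A} (hh : IsSelfAdjoint h) {s : ℝ}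
    (hs : 0 < s) : ∃ k : A, ‖h * k‖ ≤ 1 ∧ ‖h * k * h - h‖ ≤ s := by
  have denom_ne_zero (t : ℝ) : t ^ 2 + s ^ 2 ≠ 0 := by positivity
  let g : ℝ → ℝ := fun t => t / (t ^ 2 + s ^ 2)
  have : g 0 = 0 := zero_div _
  have : Continuous g := by fun_prop (disch := exact denom_ne_zero _)
  have mul_eq : h * cfcₙ g h = cfcₙ (fun t => t * g t) h := by
    rw [cfcₙ_mul (fun t => t) g h, cfcₙ_id' ℝ h]
  have mul_mul_sub_eq : h * cfcₙ g h * h - h = cfcₙ (fun t => t * g t * t - t) h := by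
    rw [cfcₙ_sub (fun t => t * g t * t) (fun t => t) h,
      cfcₙ_mul (fun t => t * g t) (fun t => t) h, cfcₙ_id' ℝ h, mul_eq]
  refine ⟨cfcₙ g h, ?_, ?_⟩
  · rw [mul_eq]
    refine norm_cfcₙ_le fun t _ => ?_
    have eq_div : t * g t = t ^ 2 / (t ^ 2 + s ^ 2) := by ring
    rw [eq_div, Real.norm_of_nonneg (by positivity), div_le_one (by positivity)]
    exact le_add_of_nonneg_right (sq_nonneg s)
  · rw [mul_mul_sub_eq]
    refine norm_cfcₙ_le fun t _ => ?_
    have eq_div : t * g t * t - t = -(t * s ^ 2 / (t ^ 2 + s ^ 2)) := by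
      have := denom_ne_zero t
      simp only [g]
      field_simp
      ring
    rw [eq_div, norm_neg, Real.norm_eq_abs, abs_div, abs_mul, abs_of_nonneg (sq_nonneg s),
      abs_of_pos (by positivity : 0 < t ^ 2 + s ^ 2), div_le_iff₀ (by positivity), ← sq_abs t]
    have abs_mul_le : |t| * s ≤ |t| ^ 2 + s ^ 2 := by
      nlinarith [two_mul_le_add_sq |t| s, mul_nonneg (abs_nonneg t) hs.le]
    calc |t| * s ^ 2 = s * (|t| * s) := by ring
      _ ≤ s * (|t| ^ 2 + s ^ 2) := by gcongr

lemma exists_seq_norm_mul_le_one_tendsto_left (a : A) :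
    ∃ u : ℕ → A, (∀ n, ‖a * u n‖ ≤ 1) ∧ Tendsto (fun n => a * u n * a) atTop (𝓝 a) := by
  choose k norm_le norm_sub_le using fun n : ℕ =>
    exists_norm_mul_le_one_norm_mul_mul_sub_le (.mul_star_self a)
      (Nat.one_div_pos_of_nat (α := ℝ) (n := n))
  simp only [mul_assoc a (star a) (k _)] at norm_le norm_sub_le
  refine ⟨fun n => star a * k n, norm_le, tendsto_mul_of_tendsto_mul_mul_star norm_le ?_⟩
  rw [tendsto_iff_norm_sub_tendsto_zero]
  exact squeeze_zero (fun _ => norm_nonneg _) norm_sub_le tendsto_one_div_add_atTop_nhds_zero_nat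

lemma exists_seq_norm_mul_le_one_tendsto_right (b : A) :
    ∃ v : ℕ → A, (∀ n, ‖v n * b‖ ≤ 1) ∧ Tendsto (fun n => b * (v n * b)) atTop (𝓝 b) := by
  obtain ⟨u, norm_le, tendsto⟩ := exists_seq_norm_mul_le_one_tendsto_left (star b)
  refine ⟨fun n => star (u n), fun n => ?_, ?_⟩
  · simpa [← norm_star (star (u n) * b)] using norm_le n
  · simpa [mul_assoc] using tendsto.star

lemma exists_seq_tendsto_of_mem_closure_twoSidedCorner (a b : A) :
    ∃ u v : ℕ → A, (∀ n, ‖a * u n‖ ≤ 1) ∧ (∀ n, ‖v n * b‖ ≤ 1) ∧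
      ∀ x ∈ closure (twoSidedCorner a b : Set A),
        Tendsto (fun n => a * u n * x * (v n * b)) atTop (𝓝 x) := by
  obtain ⟨u, norm_u_le, tendsto_u⟩ := exists_seq_norm_mul_le_one_tendsto_left a
  obtain ⟨v, norm_v_le, tendsto_v⟩ := exists_seq_norm_mul_le_one_tendsto_right b
  exact ⟨u, v, norm_u_le, norm_v_le, fun x hx =>
    tendsto_mul_mul_of_mem_closure_twoSidedCorner norm_u_le norm_v_le tendsto_u tendsto_v hx⟩

end Approximation

section Ideal

variable {A : Type*} [NonUnitalCStarAlgebra A] (I : TwoSidedIdeal A)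

lemma closure_twoSidedCorner_inter_subset (a b : A) :
    closure (twoSidedCorner a b : Set A) ∩ I ⊆ closure {x | ∃ i ∈ I, x = a * i * b} := by
  rintro x ⟨hx, hxI⟩
  obtain ⟨u, v, -, -, tendsto⟩ := exists_seq_tendsto_of_mem_closure_twoSidedCorner a b
  refine mem_closure_of_tendsto (tendsto x hx) (.of_forall fun n => ?_)
  exact ⟨u n * x * v n, I.mul_mem_right _ _ (I.mul_mem_left _ _ hxI), by simp only [mul_assoc]⟩

lemma closure_twoSidedCorner_inter_of_isClosed (hI : IsClosed (I : Set A)) (a b : A) :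
    closure (twoSidedCorner a b : Set A) ∩ I = closure {x | ∃ i ∈ I, x = a * i * b} := by
  refine (closure_twoSidedCorner_inter_subset I a b).antisymm
    (Set.subset_inter (closure_mono ?_) (closure_minimal ?_ hI))
  · rintro _ ⟨i, -, rfl⟩
    exact ⟨i, rfl⟩
  · rintro _ ⟨i, hi, rfl⟩
    exact I.mul_mem_right _ _ (I.mul_mem_left _ _ hi)

variable {I} in
lemma exists_mem_twoSidedCorner_sub_mem_norm_lt {a b x y : A} (hx : x ∈ twoSidedCorner a b)
    (hxy : x - y ∈ I) {ε : ℝ} (hε : 0 < ε) :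
    ∃ x' ∈ twoSidedCorner a b, x - x' ∈ I ∧ ‖x'‖ < ‖y‖ + ε := by
  obtain ⟨u, v, norm_u_le, norm_v_le, tendsto⟩ :=
    exists_seq_tendsto_of_mem_closure_twoSidedCorner a b
  obtain ⟨n, hn⟩ :=
    ((tendsto_iff_norm_sub_tendsto_zero.1 (tendsto x (subset_closure hx))).eventually_lt_const
      hε).exists
  refine ⟨x - a * u n * (x - y) * (v n * b), sub_mem hx ⟨u n * (x - y) * v n, ?_⟩, ?_, ?_⟩
  · simp [mul_assoc]
  · rw [sub_sub_cancel]
    exact I.mul_mem_right _ _ (I.mul_mem_left _ _ hxy)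
  · have norm_compress_le : ‖a * u n * y * (v n * b)‖ ≤ ‖y‖ := by
      calc ‖a * u n * y * (v n * b)‖ ≤ ‖a * u n‖ * ‖y‖ * ‖v n * b‖ := norm_mul₃_le
        _ ≤ 1 * ‖y‖ * 1 := by gcongr <;> simp only [norm_u_le, norm_v_le]
        _ = ‖y‖ := by ring
    calc ‖x - a * u n * (x - y) * (v n * b)‖
        = ‖a * u n * y * (v n * b) - (a * u n * x * (v n * b) - x)‖ := by noncomm_ring
      _ ≤ ‖a * u n * y * (v n * b)‖ + ‖a * u n * x * (v n * b) - x‖ := norm_sub_le _ _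
      _ < ‖y‖ + ε := add_lt_add_of_le_of_lt norm_compress_le hn

end Ideal

section Image

lemma closure_subset_image_closure_of_exists_norm_le {G H : Type*} [NormedAddCommGroup G]
    [CompleteSpace G] [NormedAddCommGroup H] (f : NormedAddGroupHom G H) {K : AddSubgroup G}
    {L : AddSubgroup H} {C : ℝ} (hC : 0 < C)
    (hlift : ∀ z ∈ L, ∃ x ∈ K, f x = z ∧ ‖x‖ ≤ C * ‖z‖) :
    closure (L : Set H) ⊆ f '' closure (K : Set G) := by
  intro z hz
  have : CompleteSpace K.topologicalClosure :=
    K.isClosed_topologicalClosure.completeSpace_coe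
  have surjOn :
      (f.comp (NormedAddGroupHom.incl K.topologicalClosure)).SurjectiveOnWith L C := fun z hz => by
    obtain ⟨x, hx, hxz, norm_x_le⟩ := hlift z hz
    exact ⟨⟨x, subset_closure hx⟩, hxz, norm_x_le⟩
  obtain ⟨x, hxz, -⟩ := controlled_closure_of_complete hC one_pos surjOn z hz
  exact ⟨x, x.2, hxz⟩

variable {A B : Type*} [NonUnitalCStarAlgebra A] [NonUnitalNormedRing B] [NormedSpace ℂ B]
  [CompleteSpace B] {q : A →ₙₐ[ℂ] B}

lemma exists_mem_twoSidedCorner_map_eq_norm_le (hqc : Continuous q)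
    (hq : Function.Surjective q) (a b : A) :
    ∃ C > 0, ∀ z ∈ twoSidedCorner (q a) (q b), ∃ x ∈ twoSidedCorner a b,
      q x = z ∧ ‖x‖ ≤ C * ‖z‖ := by
  let L : A →L[ℂ] B := ⟨(q : A →ₗ[ℂ] B), hqc⟩
  obtain ⟨C, C_pos, exists_lift⟩ := L.exists_preimage_norm_le hq
  refine ⟨C + 1, by positivity, fun z hz => ?_⟩
  obtain rfl | hz0 := eq_or_ne z 0
  · exact ⟨0, zero_mem _, map_zero q, by simp⟩
  obtain ⟨x, hx, rfl⟩ := (image_twoSidedCorner hq a b).ge hz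
  obtain ⟨y, hy : q y = q x, norm_y_le⟩ := exists_lift (q x)
  have sub_mem_ker : x - y ∈ TwoSidedIdeal.ker q := by simp [TwoSidedIdeal.mem_ker, hy]
  obtain ⟨x', hx', hxx', norm_x'_lt⟩ :=
    exists_mem_twoSidedCorner_sub_mem_norm_lt hx sub_mem_ker (norm_pos_iff.2 hz0)
  rw [TwoSidedIdeal.mem_ker, map_sub, sub_eq_zero] at hxx'
  refine ⟨x', hx', hxx'.symm, ?_⟩
  calc ‖x'‖ ≤ ‖y‖ + ‖q x‖ := norm_x'_lt.le
    _ ≤ C * ‖q x‖ + ‖q x‖ := by gcongr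
    _ = (C + 1) * ‖q x‖ := by ring

theorem image_closure_twoSidedCorner (hqc : Continuous q) (hq : Function.Surjective q) (a b : A) :
    q '' closure (twoSidedCorner a b : Set A) =
      closure (twoSidedCorner (q a) (q b) : Set B) := by
  apply Set.Subset.antisymm
  · rw [← image_twoSidedCorner hq]
    exact image_closure_subset_closure_image hqc
  · obtain ⟨C, C_pos, exists_lift⟩ := exists_mem_twoSidedCorner_map_eq_norm_le hqc hq a b
    let L : A →L[ℂ] B := ⟨(q : A →ₗ[ℂ] B), hqc⟩
    exact closure_subset_image_closure_of_exists_norm_le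
      ((L : A →+ B).mkNormedAddGroupHom ‖L‖ L.le_opNorm) C_pos exists_lift

end Image

theorem stmt_3_general {A B : Type*} [NonUnitalCStarAlgebra A] [NonUnitalNormedRing B]
    [NormedSpace ℂ B] [CompleteSpace B] (q : A →ₙₐ[ℂ] B) (hqc : Continuous q)
    (hq : Function.Surjective q) (a b : A) :
    q '' closure {x : A | ∃ y : A, x = a * y * b} =
      closure {z : B | ∃ w : B, z = q a * w * q b} ∧
    closure {x : A | ∃ y : A, x = a * y * b} ∩ {x : A | q x = 0} =
      closure {x : A | ∃ i : A, q i = 0 ∧ x = a * i * b} := by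
  simp only [← coe_twoSidedCorner]
  refine ⟨image_closure_twoSidedCorner hqc hq a b, ?_⟩
  have ker_eq : (TwoSidedIdeal.ker q : Set A) = {x | q x = 0} :=
    Set.ext fun _ => TwoSidedIdeal.mem_ker q
  have isClosed_ker : IsClosed (TwoSidedIdeal.ker q : Set A) :=
    ker_eq ▸ isClosed_eq hqc continuous_const
  simpa only [ker_eq, TwoSidedIdeal.mem_ker] using
    closure_twoSidedCorner_inter_of_isClosed _ isClosed_ker a b

/-- Let `A` be a C*-algebra, `I` a closed two-sided ideal with quotient map
`q : A → A/I` (encoded as a surjective non-unital star algebra homomorphism `q : A → B`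
whose kernel is `I`), and `a ∈ A` with image `ȧ = q a`. Then `q` maps `closure (aAa)` onto
`closure (ȧ B ȧ)`, and the kernel of the restriction of `q` to `closure (aAa)` is
`closure (aIa)`; consequently `closure (ȧ B ȧ) ≅ closure (aAa) / closure (aIa)`. -/
theorem stmt_3 {A B : Type*} [NonUnitalCStarAlgebra A] [NonUnitalCStarAlgebra B]
    (q : A →⋆ₙₐ[ℂ] B) (hq : Function.Surjective q)
    (I : Set A) (hI : I = {x : A | q x = 0})
    (a : A) :
    q '' closure {x : A | ∃ y : A, x = a * y * a} =
      closure {z : B | ∃ w : B, z = q a * w * q a} ∧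
    {x : A | x ∈ closure {x : A | ∃ y : A, x = a * y * a} ∧ q x = 0} =
      closure {x : A | ∃ i ∈ I, x = a * i * a} := by
  subst hI
  exact stmt_3_general (q : A →ₙₐ[ℂ] B) (map_continuous q) hq a a
end

section
/- Let A be a unital C*-algebra which is SAW*, and let p ∈ A be a projection (p = p* = p²). Then the corner C*-algebra pAp is SAW*: for any self-adjoint a, b ∈ pAp with ab = 0, there exists z ∈ pAp with 0 ≤ z ≤ p such that az = a and zb = 0. -/
theorem mul_conjugate_eq_self {S : Type*} [Semigroup S] {a p z : S}
    (hap : a * p = a) (haz : a * z = a) : a * (p * z * p) = a := by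
  rw [← mul_assoc, ← mul_assoc, hap, haz, hap]

theorem conjugate_mul_eq_zero {S : Type*} [SemigroupWithZero S] {b p z : S}
    (hpb : p * b = b) (hzb : z * b = 0) : p * z * p * b = 0 := by
  rw [mul_assoc, hpb, mul_assoc, hzb, mul_zero]

theorem mem_corner_iff_eq_conjugate {S : Type*} [Semigroup S] {p r : S}
    (hp : IsIdempotentElem p) : r ∈ Subsemigroup.corner p ↔ r = p * r * p := by
  refine ⟨fun hr ↦ ?_, fun hr ↦ ⟨r, hr.symm⟩⟩
  obtain ⟨hpr, hrp⟩ := (Subsemigroup.mem_corner_iff hp).mp hr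
  rw [hpr, hrp]

section StarOrderedRing

variable {R : Type*} [Semiring R] [PartialOrder R] [StarRing R] [StarOrderedRing R] {p : R}

theorem conjugate_le_of_le_one {z : R} (hp : IsStarProjection p) (hz : z ≤ 1) :
    p * z * p ≤ p :=
  calc
    p * z * p ≤ p * 1 * p := hp.isSelfAdjoint.conjugate_le_conjugate hz
    _ = p := by rw [mul_one, hp.isIdempotentElem.eq]

theorem stmt_4_general
    (hSAW : ∀ a b : R, IsSelfAdjoint a → IsSelfAdjoint b → a * b = 0 →
      ∃ z : R, 0 ≤ z ∧ z ≤ 1 ∧ a * z = a ∧ z * b = 0)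
    (hp : IsStarProjection p) (a b : R)
    (ha : a ∈ Subsemigroup.corner p) (hb : b ∈ Subsemigroup.corner p)
    (ha_sa : IsSelfAdjoint a) (hb_sa : IsSelfAdjoint b) (hab : a * b = 0) :
    ∃ z ∈ Subsemigroup.corner p, 0 ≤ z ∧ z ≤ p ∧ a * z = a ∧ z * b = 0 := by
  obtain ⟨z, hz_nonneg, hz_le_one, haz, hzb⟩ := hSAW a b ha_sa hb_sa hab
  have hap : a * p = a := ((Subsemigroup.mem_corner_iff hp.isIdempotentElem).mp ha).2
  have hpb : p * b = b := ((Subsemigroup.mem_corner_iff hp.isIdempotentElem).mp hb).1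
  exact ⟨p * z * p, ⟨z, rfl⟩, hp.isSelfAdjoint.conjugate_nonneg hz_nonneg,
    conjugate_le_of_le_one hp hz_le_one, mul_conjugate_eq_self hap haz,
    conjugate_mul_eq_zero hpb hzb⟩

end StarOrderedRing

/-- Let `A` be a unital C*-algebra which is SAW*, and let `p ∈ A` be a
projection. Then the corner `pAp` is SAW*: for self-adjoint `a, b ∈ pAp` with `a * b = 0`
there is `z ∈ pAp` with `0 ≤ z ≤ p`, `a * z = a` and `z * b = 0`. -/
theorem stmt_4 {A : Type*} [CStarAlgebra A] [PartialOrder A] [StarOrderedRing A]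
    (hSAW : ∀ a b : A, IsSelfAdjoint a → IsSelfAdjoint b → a * b = 0 →
      ∃ z : A, 0 ≤ z ∧ z ≤ 1 ∧ a * z = a ∧ z * b = 0)
    (p : A) (hp_sa : IsSelfAdjoint p) (hp_idem : IsIdempotentElem p) :
    ∀ a b : A, a = p * a * p → b = p * b * p →
      IsSelfAdjoint a → IsSelfAdjoint b → a * b = 0 →
      ∃ z : A, z = p * z * p ∧ 0 ≤ z ∧ z ≤ p ∧ a * z = a ∧ z * b = 0 := by
  simpa only [mem_corner_iff_eq_conjugate hp_idem] using stmt_4_general hSAW ⟨hp_idem, hp_sa⟩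
end
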